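/- Let n ≥ 5 and let R be an (n+2)-dimensional complex solvable Leibniz algebra whose nilradical is isomorphic to F_n^1 or to F_n^2 (the naturally graded non-Lie filiform Leibniz algebras of dimension n). Then R is isomorphic to one of the three algebras R_1, R_2, R_3. -/

import Mathlib

section LeibnizGeneralities

variable {L : Type*} [AddCommGroup L] [Module ℂ L]

/-- The Leibniz identity `[[a,b],c] = [[a,c],b] + [a,[b,c]]` for a bilinear bracket. -/
def IsLeibnizBracket (b : L →ₗ[ℂ] L →ₗ[ℂ] L) : Prop :=
  ∀ u v w : L, b (b u v) w = b (b u w) v + b u (b v w)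

/-- The subspace spanned by all brackets of elements of `A` with elements of `B`. -/
def bracketSpan (b : L →ₗ[ℂ] L →ₗ[ℂ] L) (A B : Submodule ℂ L) : Submodule ℂ L :=
  Submodule.span ℂ {z | ∃ u ∈ A, ∃ v ∈ B, z = b u v}

/-- The lower central series of the subalgebra `N`:
`N^1 = N`, `N^{k+1} = [N^k, N]` (here `lowerCentral b N k` is `N^{k+1}`). -/
def lowerCentral (b : L →ₗ[ℂ] L →ₗ[ℂ] L) (N : Submodule ℂ L) : ℕ → Submodule ℂ L
  | 0 => N
  | k + 1 => bracketSpan b (lowerCentral b N k) N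

/-- The derived series of the algebra:
`L^{(1)} = L`, `L^{(s+1)} = [L^{(s)}, L^{(s)}]` (here `leibnizDerivedSeries b s` is `L^{(s+1)}`). -/
def leibnizDerivedSeries (b : L →ₗ[ℂ] L →ₗ[ℂ] L) : ℕ → Submodule ℂ L
  | 0 => ⊤
  | s + 1 => bracketSpan b (leibnizDerivedSeries b s) (leibnizDerivedSeries b s)

/-- The subalgebra `N` is nilpotent: some term of its lower central series vanishes. -/
def IsNilpotentOn (b : L →ₗ[ℂ] L →ₗ[ℂ] L) (N : Submodule ℂ L) : Prop :=
  ∃ k, lowerCentral b N k = ⊥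

/-- The algebra is solvable: some term of its derived series vanishes. -/
def IsSolvableBracket (b : L →ₗ[ℂ] L →ₗ[ℂ] L) : Prop :=
  ∃ s, leibnizDerivedSeries b s = ⊥

/-- A (two-sided) ideal of the Leibniz algebra. -/
def IsLeibnizIdeal (b : L →ₗ[ℂ] L →ₗ[ℂ] L) (I : Submodule ℂ L) : Prop :=
  bracketSpan b I ⊤ ≤ I ∧ bracketSpan b ⊤ I ≤ I

/-- `N` is the nilradical: a nilpotent ideal containing every nilpotent ideal. -/
def IsNilradical (b : L →ₗ[ℂ] L →ₗ[ℂ] L) (N : Submodule ℂ L) : Prop :=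
  IsLeibnizIdeal b N ∧ IsNilpotentOn b N ∧
    ∀ J : Submodule ℂ L, IsLeibnizIdeal b J → IsNilpotentOn b J → J ≤ N

/-- `N` is null-filiform of dimension `n`: `dim N^i = n + 1 - i` for `1 ≤ i ≤ n + 1`. -/
def IsNullFiliform (b : L →ₗ[ℂ] L →ₗ[ℂ] L) (N : Submodule ℂ L) (n : ℕ) : Prop :=
  Module.finrank ℂ N = n ∧
    ∀ i : ℕ, 1 ≤ i → i ≤ n + 1 →
      Module.finrank ℂ (lowerCentral b N (i - 1)) = n + 1 - i

end LeibnizGeneralities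

/-- The bracket of the naturally graded filiform Leibniz algebra `F_n^1` on `Fin n → ℂ`
(with `e_i = Pi.single (i-1) 1` for `1 ≤ i ≤ n`): the only nonzero products of basis
vectors are `[e_i, e_1] = e_{i+1}` for `2 ≤ i ≤ n-1`. -/
def bracketF1 (n : ℕ) (u v : Fin n → ℂ) : Fin n → ℂ := fun j =>
  if 2 ≤ j.val then u ⟨j.val - 1, lt_of_le_of_lt (Nat.sub_le _ _) j.isLt⟩ * v ⟨0, lt_of_le_of_lt (Nat.zero_le _) j.isLt⟩ else 0

/-- The bracket of the naturally graded filiform Leibniz algebra `F_n^2` on `Fin n → ℂ`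
(with `e_i = Pi.single (i-1) 1` for `1 ≤ i ≤ n`): the only nonzero products of basis
vectors are `[e_1, e_1] = e_3` and `[e_i, e_1] = e_{i+1}` for `3 ≤ i ≤ n-1`. -/
def bracketF2 (n : ℕ) (u v : Fin n → ℂ) : Fin n → ℂ := fun j =>
  if j.val = 2 then u ⟨0, lt_of_le_of_lt (Nat.zero_le _) j.isLt⟩ * v ⟨0, lt_of_le_of_lt (Nat.zero_le _) j.isLt⟩
  else if 3 ≤ j.val then u ⟨j.val - 1, lt_of_le_of_lt (Nat.sub_le _ _) j.isLt⟩ * v ⟨0, lt_of_le_of_lt (Nat.zero_le _) j.isLt⟩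
  else 0
/-!
`R₁` is the `(n+2)`-dimensional complex solvable Leibniz algebra with basis
`e_1, …, e_n, x, y` and nonzero products `[e_i, e_1] = e_{i+1}` for `2 ≤ i ≤ n-1`,
`[e_1, x] = e_1`, `[x, e_1] = -e_1`, `[e_i, x] = (i-1) • e_i` for `2 ≤ i ≤ n`,
`[e_i, y] = e_i` for `2 ≤ i ≤ n`.  We realize it on `Fin (n+2) → ℂ`, where
`x = Pi.single 0 1`, `e_i = Pi.single i 1` for `1 ≤ i ≤ n` and
`y = Pi.single (Fin.last (n+1)) 1`, the bracket being given coordinatewise.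
-/

/-- The bracket of the Leibniz algebra `R₁` on `Fin (n+2) → ℂ`. -/
def bracketR1 (n : ℕ) (u v : Fin (n + 2) → ℂ) : Fin (n + 2) → ℂ := fun k =>
  if k.val = 1 then u 1 * v 0 - u 0 * v 1
  else if 2 ≤ k.val ∧ k.val ≤ n then
    (if 3 ≤ k.val then u ⟨k.val - 1, lt_of_le_of_lt (Nat.sub_le _ _) k.isLt⟩ * v 1 else 0)
      + ((k.val : ℂ) - 1) * u k * v 0 + u k * v (Fin.last (n + 1))
  else 0

/-!
`R₂` is the `(n+2)`-dimensional complex solvable Leibniz algebra with basis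
`e_1, …, e_n, x, y` and nonzero products `[e_1, e_1] = e_3`,
`[e_i, e_1] = e_{i+1}` for `3 ≤ i ≤ n-1`, `[e_1, x] = e_1`, `[x, e_1] = -e_1`,
`[e_i, x] = (i-1) • e_i` for `3 ≤ i ≤ n`, `[e_2, y] = e_2`, `[y, e_2] = -e_2`.
We realize it on `Fin (n+2) → ℂ`, where `x = Pi.single 0 1`,
`e_i = Pi.single i 1` for `1 ≤ i ≤ n` and `y = Pi.single (Fin.last (n+1)) 1`,
the bracket being given coordinatewise.
-/

/-- The bracket of the Leibniz algebra `R₂` on `Fin (n+2) → ℂ`. -/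
def bracketR2 (n : ℕ) (u v : Fin (n + 2) → ℂ) : Fin (n + 2) → ℂ := fun k =>
  if k.val = 1 then u 1 * v 0 - u 0 * v 1
  else if k.val = 2 then u 2 * v (Fin.last (n + 1)) - u (Fin.last (n + 1)) * v 2
  else if 3 ≤ k.val ∧ k.val ≤ n then
    (if 4 ≤ k.val then u ⟨k.val - 1, lt_of_le_of_lt (Nat.sub_le _ _) k.isLt⟩ * v 1
      else u 1 * v 1)
      + ((k.val : ℂ) - 1) * u k * v 0
  else 0

/-!
`R₃` is the `(n+2)`-dimensional complex solvable Leibniz algebra with basis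
`e_1, …, e_n, x, y` and nonzero products `[e_1, e_1] = e_3`,
`[e_i, e_1] = e_{i+1}` for `3 ≤ i ≤ n-1`, `[e_1, x] = e_1`, `[x, e_1] = -e_1`,
`[e_i, x] = (i-1) • e_i` for `3 ≤ i ≤ n`, `[e_2, y] = e_2`.
We realize it on `Fin (n+2) → ℂ`, where `x = Pi.single 0 1`,
`e_i = Pi.single i 1` for `1 ≤ i ≤ n` and `y = Pi.single (Fin.last (n+1)) 1`,
the bracket being given coordinatewise.
-/

/-- The bracket of the Leibniz algebra `R₃` on `Fin (n+2) → ℂ`. -/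
def bracketR3 (n : ℕ) (u v : Fin (n + 2) → ℂ) : Fin (n + 2) → ℂ := fun k =>
  if k.val = 1 then u 1 * v 0 - u 0 * v 1
  else if k.val = 2 then u 2 * v (Fin.last (n + 1))
  else if 3 ≤ k.val ∧ k.val ≤ n then
    (if 4 ≤ k.val then u ⟨k.val - 1, lt_of_le_of_lt (Nat.sub_le _ _) k.isLt⟩ * v 1
      else u 1 * v 1)
      + ((k.val : ℂ) - 1) * u k * v 0
  else 0

/-!
Both nilradicals have the bracket `[u, v] = v 0 • S u`, where `S` shifts along the chain
`e_c ↦ e_2 ↦ e_3 ↦ ⋯` of one of the two generators `e_0`, `e_1`. Right multiplications by elements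
of `L` act on the nilradical as derivations of this bracket. Such a derivation is triangular along
the coordinate flag, and its diagonal is determined by its weights `(α, β)` at `e_0` and `e_1`. The
weights define a linear map `L → ℂ × ℂ` that kills brackets. On its kernel right multiplication is
nilpotent, so by maximality of the nilradical the kernel is the nilradical, and for `dim L = n + 2`
the map is surjective. Hence some `h` in `L` has weights `(1, n)`, for which the diagonal entries are
nonzero and distinct, and a change of adapted basis diagonalizes right multiplication by `h`.

Every class modulo the nilradical has a representative `a` with `[a, h] = 0`. It acts diagonally
from both sides, because these actions commute with that of `h`, and two such representatives have
zero bracket. The right entries of `a` are given by its weights. The left entries vanish except at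
`e_0`, where the entry is `-α`, and at `e_1`, where it is `0` or, for `c = 0` only, possibly `-β`.
Taking for `x` and `y` the representatives with weights `(1, s)` and `(0, 1)`, with `s = 1` for
`c = 1` and `s = 0` for `c = 0`, gives the multiplication tables of `R₁`, `R₂` and `R₃`.
-/

section Triangular

variable {R M : Type*} [CommRing R] [AddCommGroup M] [Module R M]

/-- `D` is triangular along the filtration `F` with diagonal `w`: it acts on each layer
`F k / F (k + 1)` as the scalar `w k`. -/
def IsTriangularAlong (F : ℕ → Submodule R M) (w : ℕ → R) (D : Module.End R M) : Prop :=
  ∀ k, ∀ u ∈ F k, D u - w k • u ∈ F (k + 1)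

namespace IsTriangularAlong

section Ring

variable {F : ℕ → Submodule R M} {w w' : ℕ → R} {D D' : Module.End R M}

lemma apply_mem (hF : Antitone F) (h : IsTriangularAlong F w D) {k : ℕ} {u : M} (hu : u ∈ F k) :
    D u ∈ F k := by
  simpa using add_mem (hF k.le_succ (h k u hu)) ((F k).smul_mem (w k) hu)

lemma mul (hF : Antitone F) (h : IsTriangularAlong F w D) (h' : IsTriangularAlong F w' D') :
    IsTriangularAlong F (w * w') (D * D') := by
  intro k u hu
  have hsplit : (D * D') u - (w * w') k • u =
      D (D' u - w' k • u) + w' k • (D u - w k • u) := by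
    simp only [Module.End.mul_apply, Pi.mul_apply, map_sub, map_smul]
    module
  rw [hsplit]
  exact add_mem (h.apply_mem hF (h' k u hu)) (Submodule.smul_mem _ _ (h k u hu))

lemma commutator (hF : Antitone F) (h : IsTriangularAlong F w D)
    (h' : IsTriangularAlong F w' D') : IsTriangularAlong F 0 (D * D' - D' * D) := by
  intro k u hu
  have hdiff := sub_mem (h.mul hF h' k u hu) (h'.mul hF h k u hu)
  rw [mul_comm w' w, sub_sub_sub_cancel_right] at hdiff
  simpa using hdiff

end Ring

section Field

variable {K V : Type*} [Field K] [AddCommGroup V] [Module K V] {F : ℕ → Submodule K V}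
  {w : ℕ → K} {D : Module.End K V}

lemma eq_zero_of_apply_eq_smul (h : IsTriangularAlong F w D) {m n : ℕ} (hmn : m ≤ n)
    (hn : F n = ⊥) {u : V} (hu : u ∈ F m) {μ : K} (hDu : D u = μ • u)
    (hμ : ∀ k, m ≤ k → k < n → w k ≠ μ) : u = 0 := by
  have hmem : ∀ k, m ≤ k → k ≤ n → u ∈ F k := by
    intro k hmk
    induction k, hmk using Nat.le_induction with
    | base => exact fun _ ↦ hu
    | succ k hmk ih =>
      intro hkn
      have hlayer := h k u (ih (by omega))
      rw [hDu, ← sub_smul] at hlayer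
      exact (Submodule.smul_mem_iff _ (sub_ne_zero.2 (hμ k hmk hkn).symm)).1 hlayer
  simpa [hn] using hmem n hmn le_rfl

/-- `D - w k` maps `F k` into `F (k + 1)` and is bijective there, so the image of `e` can be
cancelled by a correction in `F (k + 1)`. -/
lemma exists_apply_eq_smul [FiniteDimensional K V] (hF : Antitone F)
    (h : IsTriangularAlong F w D) {k n : ℕ} (hkn : k < n) (hn : F n = ⊥)
    (hw : ∀ j, k < j → j < n → w j ≠ w k) {e : V} (he : e ∈ F k) :
    ∃ v, v - e ∈ F (k + 1) ∧ D v = w k • v := by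
  let A : Module.End K V := D - w k • 1
  have hA : ∀ u, A u = D u - w k • u := fun u ↦ rfl
  have hmaps : ∀ u ∈ F (k + 1), A u ∈ F (k + 1) := fun u hu ↦ h k u (hF k.le_succ hu)
  have hinj : Function.Injective (A.restrict hmaps) := by
    refine (injective_iff_map_eq_zero _).2 fun u hu ↦ Subtype.ext ?_
    have hker : A u = 0 := congrArg Subtype.val hu
    exact h.eq_zero_of_apply_eq_smul hkn hn u.2 (sub_eq_zero.1 hker) hw
  obtain ⟨z, hz⟩ := LinearMap.surjective_of_injective hinj ⟨A e, h k e he⟩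
  have hAz : A z = A e := congrArg Subtype.val hz
  refine ⟨e - z, by simp, sub_eq_zero.1 ?_⟩
  rw [← hA, map_sub, hAz, sub_self]

end Field

end IsTriangularAlong

/-- The subspace of vectors whose first `k` coordinates vanish. -/
def coordFlag (R : Type*) [CommRing R] (n k : ℕ) : Submodule R (Fin n → R) :=
  Submodule.pi {j | (j : ℕ) < k} fun _ ↦ ⊥

variable {n k : ℕ}

lemma mem_coordFlag {u : Fin n → R} : u ∈ coordFlag R n k ↔ ∀ j : Fin n, (j : ℕ) < k → u j = 0 := by
  simp [coordFlag]

lemma coordFlag_antitone : Antitone (coordFlag R n) :=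
  fun _ _ hkl _ hu ↦ mem_coordFlag.2 fun j hj ↦ mem_coordFlag.1 hu j (hj.trans_le hkl)

lemma eq_zero_of_mem_coordFlag {u : Fin n → R} (hnk : n ≤ k) (hu : u ∈ coordFlag R n k) : u = 0 :=
  funext fun j ↦ mem_coordFlag.1 hu j (j.isLt.trans_le hnk)

lemma coordFlag_self : coordFlag R n n = ⊥ :=
  eq_bot_iff.2 fun _ ↦ eq_zero_of_mem_coordFlag le_rfl

lemma single_mem_coordFlag (k : Fin n) : Pi.single k (1 : R) ∈ coordFlag R n k :=
  mem_coordFlag.2 fun _ hj ↦ Pi.single_eq_of_ne (Fin.ne_of_lt hj) _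

lemma isTriangularAlong_coordFlag_of_single {w : ℕ → R} {D : Module.End R (Fin n → R)}
    (h : ∀ k : Fin n, D (Pi.single k 1) - w k • Pi.single k 1 ∈ coordFlag R n (k + 1)) :
    IsTriangularAlong (coordFlag R n) w D := by
  intro k u hu
  have hsum : D u - w k • u = ∑ j, u j • (D (Pi.single j 1) - w k • Pi.single j 1) := by
    have hexp : u = ∑ j, u j • Pi.single j (1 : R) := by simpa using (pi_eq_sum_univ' u)
    conv_lhs => rw [hexp]
    simp only [map_sum, map_smul, Finset.smul_sum, smul_sub, Finset.sum_sub_distrib,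
      smul_comm (w k)]
  rw [hsum]
  refine Submodule.sum_mem _ fun j _ ↦ ?_
  rcases lt_trichotomy (j : ℕ) k with hjk | rfl | hkj
  · simp [mem_coordFlag.1 hu j hjk]
  · exact Submodule.smul_mem _ _ (h j)
  · refine Submodule.smul_mem _ _ ?_
    have hj : Pi.single j (1 : R) ∈ coordFlag R n (k + 1) :=
      coordFlag_antitone hkj (single_mem_coordFlag j)
    have hDj : D (Pi.single j 1) - w j • Pi.single j 1 ∈ coordFlag R n (k + 1) :=
      coordFlag_antitone (by omega) (h j)
    exact sub_mem (by simpa using add_mem hDj (Submodule.smul_mem _ (w j) hj))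
      (Submodule.smul_mem _ _ hj)

lemma IsTriangularAlong.apply_single_self {w : ℕ → R} {D : Module.End R (Fin n → R)}
    (h : IsTriangularAlong (coordFlag R n) w D) (k : Fin n) : D (Pi.single k 1) k = w k := by
  simpa [sub_eq_zero] using
    mem_coordFlag.1 (h k _ (single_mem_coordFlag k)) k (Nat.lt_succ_self _)

end Triangular

lemma mul_single_one {R ι : Type*} [CommRing R] [DecidableEq ι] (p : ι → R) (i : ι) :
    p * Pi.single i 1 = p i • Pi.single i (1 : R) := by
  ext l
  by_cases hl : l = i <;> simp [hl]

lemma exists_forall_apply_eq_mul {R ι : Type*} [CommRing R] [IsDomain R] [Finite ι] {w : ι → R}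
    (hw : Function.Injective w) {f : Module.End R (ι → R)} (hf : ∀ u, f (w * u) = w * f u) :
    ∃ p : ι → R, ∀ u, f u = p * u := by
  classical
  refine ⟨fun i ↦ f (Pi.single i 1) i, fun u ↦ ?_⟩
  suffices hdiag : f = LinearMap.mulLeft R fun i ↦ f (Pi.single i 1) i from
    LinearMap.congr_fun hdiag u
  refine LinearMap.pi_ext' fun i ↦ LinearMap.ext_ring (funext fun j ↦ ?_)
  by_cases hji : j = i
  · subst hji
    simp
  · have hcomm := congrFun (hf (Pi.single i 1)) j
    rw [mul_single_one, map_smul, Pi.smul_apply, Pi.mul_apply, smul_eq_mul] at hcomm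
    have hzero := (mul_eq_mul_right_iff.1 hcomm).resolve_left fun hij ↦ hji (hw hij.symm)
    simp [hzero, hji]

lemma exists_sub_mem_and_apply_eq_zero {K V : Type*} [Field K] [AddCommGroup V] [Module K V]
    {N : Submodule K V} [FiniteDimensional K N] {f : Module.End K V} (hf : ∀ u, f u ∈ N)
    (hinj : ∀ u ∈ N, f u = 0 → u = 0) (a : V) : ∃ a', a' - a ∈ N ∧ f a' = 0 := by
  have hrestrict : Function.Injective (f.restrict fun u (_ : u ∈ N) ↦ hf u) :=
    (injective_iff_map_eq_zero _).2 fun u hu ↦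
      Subtype.ext (hinj u u.2 (congrArg Subtype.val hu))
  obtain ⟨z, hz⟩ := LinearMap.surjective_of_injective hrestrict ⟨f a, hf a⟩
  have hfz : f z = f a := congrArg Subtype.val hz
  exact ⟨a - z, by simp, by rw [map_sub, hfz, sub_self]⟩

section Chain

section CommRing

variable {R : Type*} [CommRing R] {m : ℕ} {c : Fin (m + 3)}

/-- The nilpotent shift `e_c ↦ e_2 ↦ e_3 ↦ ⋯ ↦ e_{m+2} ↦ 0` along the chain that starts at the
generator `e_c`, where `c` is `0` or `1`. Right multiplication by `e_0` in `F_n^1` (`c = 1`) and in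
`F_n^2` (`c = 0`) is of this form; indices are shifted down by one with respect to the paper. -/
def chainShift (R : Type*) [CommRing R] {m : ℕ} (c : Fin (m + 3)) :
    Module.End R (Fin (m + 3) → R) :=
  LinearMap.pi fun j ↦
    if 3 ≤ (j : ℕ) then LinearMap.proj ⟨j - 1, by omega⟩
    else if (j : ℕ) = 2 then LinearMap.proj c else 0

lemma chainShift_apply (u : Fin (m + 3) → R) (j : Fin (m + 3)) :
    chainShift R c u j =
      if 3 ≤ (j : ℕ) then u ⟨j - 1, by omega⟩ else if (j : ℕ) = 2 then u c else 0 := by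
  simp only [chainShift, LinearMap.pi_apply]
  split_ifs <;> rfl

lemma bracketF1_eq_smul_chainShift (u v : Fin (m + 3) → ℂ) :
    bracketF1 (m + 3) u v = v 0 • chainShift ℂ 1 u := by
  ext j
  obtain ⟨_ | _ | _ | j, hj⟩ := j
  · simp [bracketF1, chainShift_apply]
  · simp [bracketF1, chainShift_apply]
  · exact mul_comm _ _
  · simp [bracketF1, chainShift_apply, mul_comm]

lemma bracketF2_eq_smul_chainShift (u v : Fin (m + 3) → ℂ) :
    bracketF2 (m + 3) u v = v 0 • chainShift ℂ 0 u := by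
  ext j
  obtain ⟨_ | _ | _ | j, hj⟩ := j <;>
    simp [bracketF2, chainShift_apply, mul_comm]

@[simp]
lemma chainShift_apply_zero (u : Fin (m + 3) → R) : chainShift R c u 0 = 0 := by
  simp [chainShift_apply]

@[simp]
lemma chainShift_apply_two (u : Fin (m + 3) → R) : chainShift R c u ⟨2, by omega⟩ = u c := by
  simp [chainShift_apply]

lemma chainShift_single_self (hc : c = 0 ∨ c = 1) :
    chainShift R c (Pi.single c 1) = Pi.single ⟨2, by omega⟩ 1 := by
  ext ⟨j, hj⟩
  rcases hc with rfl | rfl <;>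
    simp only [chainShift_apply, Pi.single_apply, Fin.ext_iff, Fin.val_zero, Fin.val_one] <;>
    split_ifs <;> first | rfl | omega

lemma chainShift_single_succ (hc : c = 0 ∨ c = 1) {k : ℕ} (hk : k + 3 < m + 3) :
    chainShift R c (Pi.single ⟨k + 2, by omega⟩ 1) = Pi.single ⟨k + 3, hk⟩ 1 := by
  ext ⟨j, hj⟩
  rcases hc with rfl | rfl <;>
    simp only [chainShift_apply, Pi.single_apply, Fin.ext_iff, Fin.val_zero, Fin.val_one] <;>
    split_ifs <;> first | rfl | omega | contradiction

lemma chainShift_single_of_ne {j : Fin (m + 3)} (hj : j = 0 ∨ j = 1) (hjc : j ≠ c) :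
    chainShift R c (Pi.single j 1) = 0 := by
  ext ⟨i, hi⟩
  simp only [chainShift_apply, Pi.single_apply, hjc.symm, Pi.zero_apply]
  rcases hj with rfl | rfl <;> simp [Fin.ext_iff] <;> omega

lemma chainShift_mem_coordFlag_two (u : Fin (m + 3) → R) :
    chainShift R c u ∈ coordFlag R (m + 3) 2 :=
  mem_coordFlag.2 fun j hj ↦ by simp [chainShift_apply, hj.ne, show ¬3 ≤ (j : ℕ) by omega]

lemma chainShift_mem_coordFlag_three {u : Fin (m + 3) → R} (huc : u c = 0) :
    chainShift R c u ∈ coordFlag R (m + 3) 3 :=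
  mem_coordFlag.2 fun j hj ↦ by simp [chainShift_apply, huc, hj]

lemma chainShift_mem_coordFlag_of_apply_eq_zero {k : ℕ} {u : Fin (m + 3) → R} (huc : u c = 0)
    (hu : u ∈ coordFlag R (m + 3) k) : chainShift R c u ∈ coordFlag R (m + 3) (k + 1) := by
  refine mem_coordFlag.2 fun j hj ↦ ?_
  rw [chainShift_apply]
  split_ifs with hj3
  · exact mem_coordFlag.1 hu _ (show (j : ℕ) - 1 < k by omega)
  · exact huc
  · rfl

lemma chainShift_pow_mem_coordFlag (hc : c = 0 ∨ c = 1) (k : ℕ) (u : Fin (m + 3) → R) :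
    (chainShift R c ^ (k + 1)) u ∈ coordFlag R (m + 3) (k + 2) := by
  induction k with
  | zero => simpa using chainShift_mem_coordFlag_two u
  | succ k ih =>
    rw [pow_succ', Module.End.mul_apply]
    refine chainShift_mem_coordFlag_of_apply_eq_zero (mem_coordFlag.1 ih c ?_) ih
    rcases hc with rfl | rfl <;> simp

lemma chain_induction (hc : c = 0 ∨ c = 1) {P : Fin (m + 3) → (Fin (m + 3) → R) → Prop}
    (h0 : P 0 (Pi.single 0 1)) (h1 : P 1 (Pi.single 1 1))
    (h2 : P c (Pi.single c 1) → P ⟨2, by omega⟩ (chainShift R c (Pi.single c 1)))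
    (hsucc : ∀ (k : ℕ) (hk : k + 3 < m + 3), P ⟨k + 2, by omega⟩ (Pi.single ⟨k + 2, by omega⟩ 1) →
      P ⟨k + 3, hk⟩ (chainShift R c (Pi.single ⟨k + 2, by omega⟩ 1))) :
    ∀ j, P j (Pi.single j 1) := by
  have hchain : ∀ (k : ℕ) (hk : k + 2 < m + 3), P ⟨k + 2, hk⟩ (Pi.single ⟨k + 2, hk⟩ 1) := by
    intro k
    induction k with
    | zero =>
      have hPc : P c (Pi.single c 1) := by rcases hc with rfl | rfl <;> assumption
      exact fun _ ↦ by simpa only [chainShift_single_self hc] using! h2 hPc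
    | succ k ih =>
      intro hk
      simpa only [chainShift_single_succ hc hk] using hsucc k hk (ih (by omega))
  rintro ⟨_ | _ | k, hk⟩
  exacts [h0, h1, hchain k hk]

lemma chain_hom_ext {M : Type*} [AddCommGroup M] [Module R M] (hc : c = 0 ∨ c = 1)
    {f g : (Fin (m + 3) → R) →ₗ[R] M} (h0 : f (Pi.single 0 1) = g (Pi.single 0 1))
    (h1 : f (Pi.single 1 1) = g (Pi.single 1 1))
    (hS : ∀ u, f u = g u → f (chainShift R c u) = g (chainShift R c u)) : f = g :=
  LinearMap.pi_ext' fun j ↦ LinearMap.ext_ring <|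
    chain_induction (P := fun _ u ↦ f u = g u) hc h0 h1 (hS _) (fun _ _ ↦ hS _) j

/-- The diagonal of a map with `f ∘ S = S ∘ f + δ S` for the shift `S` along the
chain of `e_c`, in terms of its entries `α`, `β` at `e_0`, `e_1`: each shift adds `δ`. -/
def chainWeight {R : Type*} [Semiring R] {m : ℕ} (c : Fin (m + 3)) (α β δ : R) : ℕ → R
  | 0 => α
  | 1 => β
  | k + 2 => (if c = 0 then α else β) + (k + 1) * δ

lemma chainWeight_two (hc : c = 0 ∨ c = 1) (α β δ : R) :
    chainWeight c α β δ 2 = chainWeight c α β δ c + δ := by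
  rcases hc with rfl | rfl <;> simp [chainWeight]

lemma chainWeight_add_three (c : Fin (m + 3)) (α β δ : R) (k : ℕ) :
    chainWeight c α β δ (k + 3) = chainWeight c α β δ (k + 2) + δ := by
  simp only [chainWeight]
  push_cast
  ring

lemma chainShift_chainWeight_mul (hc : c = 0 ∨ c = 1) (α β δ : R) (u : Fin (m + 3) → R) :
    (fun j : Fin (m + 3) ↦ chainWeight c α β δ j) * chainShift R c u =
      chainShift R c ((fun j : Fin (m + 3) ↦ chainWeight c α β δ j) * u) +
        δ • chainShift R c u := by
  ext ⟨j, hj⟩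
  obtain _ | _ | _ | j := j
  · simp [chainShift_apply]
  · simp [chainShift_apply]
  · simp [chainShift_apply, chainWeight_two hc, add_mul]
  · simp [chainShift_apply, chainWeight_add_three, add_mul]

section Commutation

variable {f : Module.End R (Fin (m + 3) → R)} {α β δ : R}

lemma isTriangularAlong_chainWeight (hc : c = 0 ∨ c = 1)
    (hf : ∀ u, f (chainShift R c u) = chainShift R c (f u) + δ • chainShift R c u)
    (h0 : f (Pi.single 0 1) - α • Pi.single 0 1 ∈ coordFlag R (m + 3) 1)
    (h1 : f (Pi.single 1 1) - β • Pi.single 1 1 ∈ coordFlag R (m + 3) 2) :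
    IsTriangularAlong (coordFlag R (m + 3)) (chainWeight c α β δ) f := by
  have hshift (u : Fin (m + 3) → R) (w : R) : f (chainShift R c u) - (w + δ) • chainShift R c u =
      chainShift R c (f u - w • u) := by
    rw [hf, map_sub, map_smul]
    module
  refine isTriangularAlong_coordFlag_of_single <| chain_induction
    (P := fun j u ↦ f u - chainWeight c α β δ j • u ∈ coordFlag R (m + 3) (j + 1))
    hc (by simpa [chainWeight] using h0) (by simpa [chainWeight] using h1)
    (fun hPc ↦ ?_) fun k _ hPk ↦ ?_
  · rw [chainWeight_two hc, hshift]
    exact chainShift_mem_coordFlag_three (mem_coordFlag.1 hPc c (Nat.lt_succ_self _))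
  · change f _ - chainWeight c α β δ (k + 3) • _ ∈ _
    rw [chainWeight_add_three, hshift]
    refine chainShift_mem_coordFlag_of_apply_eq_zero (mem_coordFlag.1 hPk c ?_) hPk
    rcases hc with rfl | rfl <;> simp

end Commutation

/-- `D` is a derivation of the filiform bracket `[u, v] = v 0 • S u`, where `S` is the shift along
the chain of `e_c`. -/
def IsChainDerivation (c : Fin (m + 3)) (D : Module.End R (Fin (m + 3) → R)) : Prop :=
  ∀ u v, D (v 0 • chainShift R c u) = v 0 • chainShift R c (D u) + D v 0 • chainShift R c u

namespace IsChainDerivation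

variable {D : Module.End R (Fin (m + 3) → R)}

lemma apply_apply_zero (hD : IsChainDerivation c D) (v : Fin (m + 3) → R) :
    D v 0 = v 0 * D (Pi.single 0 1) 0 := by
  have hvanish (v : Fin (m + 3) → R) (hv : v 0 = 0) : D v 0 = 0 := by
    simpa [hv, eq_comm] using congrFun (hD (Pi.single c 1) v) ⟨2, by omega⟩
  have hzero := hvanish (v - v 0 • Pi.single 0 1) (by simp)
  rwa [map_sub, map_smul, Pi.sub_apply, sub_eq_zero] at hzero

lemma apply_chainShift (hD : IsChainDerivation c D) (u : Fin (m + 3) → R) :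
    D (chainShift R c u) = chainShift R c (D u) + D (Pi.single 0 1) 0 • chainShift R c u := by
  simpa using hD u (Pi.single 0 1)

lemma isTriangularAlong (hc : c = 0 ∨ c = 1) (hD : IsChainDerivation c D) :
    IsTriangularAlong (coordFlag R (m + 3))
      (chainWeight c (D (Pi.single 0 1) 0) (D (Pi.single 1 1) 1) (D (Pi.single 0 1) 0)) D := by
  refine isTriangularAlong_chainWeight hc hD.apply_chainShift
    (mem_coordFlag.2 fun j hj ↦ ?_) (mem_coordFlag.2 fun j hj ↦ ?_)
  · obtain rfl : j = 0 := Fin.ext (by simpa using hj)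
    simp
  · obtain rfl | rfl : j = 0 ∨ j = 1 := by
      simp only [Fin.ext_iff, Fin.val_zero, Fin.val_one]
      omega
    · simp [hD.apply_apply_zero (Pi.single 1 1)]
    · simp

end IsChainDerivation

/-- The endomorphism sending `e_0` to `v₀` and `e_1` to `v₁`, extended to the chain of `e_c` by
commutation with the shift. -/
noncomputable def chainHom (c : Fin (m + 3)) (v₀ v₁ : Fin (m + 3) → R) :
    Module.End R (Fin (m + 3) → R) :=
  (Pi.basisFun R (Fin (m + 3))).constr R fun j ↦
    match j with
    | ⟨0, _⟩ => v₀
    | ⟨1, _⟩ => v₁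
    | ⟨k + 2, _⟩ => (chainShift R c ^ (k + 1)) (if c = 0 then v₀ else v₁)

section chainHom

variable {v₀ v₁ : Fin (m + 3) → R}

lemma chainHom_single_zero : chainHom c v₀ v₁ (Pi.single 0 1) = v₀ := by
  simpa using! (Pi.basisFun R (Fin (m + 3))).constr_basis R _ 0

lemma chainHom_single_one : chainHom c v₀ v₁ (Pi.single 1 1) = v₁ := by
  simpa using! (Pi.basisFun R (Fin (m + 3))).constr_basis R _ 1

lemma chainHom_single_add_two {k : ℕ} (hk : k + 2 < m + 3) :
    chainHom c v₀ v₁ (Pi.single ⟨k + 2, hk⟩ 1) =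
      (chainShift R c ^ (k + 1)) (if c = 0 then v₀ else v₁) := by
  simpa using! (Pi.basisFun R (Fin (m + 3))).constr_basis R _ ⟨k + 2, hk⟩

lemma chainHom_chainShift (hc : c = 0 ∨ c = 1) (h0 : c ≠ 0 → chainShift R c v₀ = 0)
    (h1 : c ≠ 1 → chainShift R c v₁ = 0) (u : Fin (m + 3) → R) :
    chainHom c v₀ v₁ (chainShift R c u) = chainShift R c (chainHom c v₀ v₁ u) := by
  suffices hcomp : chainHom c v₀ v₁ ∘ₗ chainShift R c = chainShift R c ∘ₗ chainHom c v₀ v₁ from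
    LinearMap.congr_fun hcomp u
  refine LinearMap.pi_ext' fun j ↦ LinearMap.ext_ring ?_
  simp only [LinearMap.comp_apply, LinearMap.single_apply]
  obtain ⟨_ | _ | k, hk⟩ := j
  · change chainHom c v₀ v₁ (chainShift R c (Pi.single 0 1)) =
      chainShift R c (chainHom c v₀ v₁ (Pi.single 0 1))
    rw [chainHom_single_zero]
    rcases eq_or_ne c 0 with rfl | hc0
    · rw [chainShift_single_self hc, chainHom_single_add_two]
      simp
    · rw [chainShift_single_of_ne (Or.inl rfl) hc0.symm, h0 hc0, map_zero]
  · change chainHom c v₀ v₁ (chainShift R c (Pi.single 1 1)) =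
      chainShift R c (chainHom c v₀ v₁ (Pi.single 1 1))
    rw [chainHom_single_one]
    rcases eq_or_ne c 1 with rfl | hc1
    · rw [chainShift_single_self hc, chainHom_single_add_two]
      simp
    · rw [chainShift_single_of_ne (Or.inr rfl) hc1.symm, h1 hc1, map_zero]
  · rw [chainHom_single_add_two, ← Module.End.mul_apply (chainShift R c), ← pow_succ']
    rcases lt_or_ge (k + 3) (m + 3) with hk3 | hk3
    · rw [chainShift_single_succ hc hk3, chainHom_single_add_two]
    · rw [eq_zero_of_mem_coordFlag hk3 (chainShift_pow_mem_coordFlag hc (k + 1) _),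
        eq_zero_of_mem_coordFlag hk3 (chainShift_mem_coordFlag_of_apply_eq_zero ?_
          (single_mem_coordFlag (R := R) ⟨k + 2, hk⟩)), map_zero]
      rcases hc with rfl | rfl <;> simp [Fin.ext_iff]

end chainHom

lemma chainWeight_one_one_zero (c : Fin (m + 3)) (k : ℕ) : chainWeight c (1 : R) 1 0 k = 1 := by
  obtain _ | _ | k := k <;> simp [chainWeight]

lemma chainWeight_zero_zero_zero (c : Fin (m + 3)) (k : ℕ) : chainWeight c (0 : R) 0 0 k = 0 := by
  obtain _ | _ | k := k <;> simp [chainWeight]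

lemma chainHom_isTriangularAlong (hc : c = 0 ∨ c = 1)
    (hv₀ : v₀ - Pi.single 0 1 ∈ coordFlag R (m + 3) 1)
    (hv₁ : v₁ - Pi.single 1 1 ∈ coordFlag R (m + 3) 2)
    (h0 : c ≠ 0 → chainShift R c v₀ = 0) (h1 : c ≠ 1 → chainShift R c v₁ = 0) :
    IsTriangularAlong (coordFlag R (m + 3)) 1 (chainHom c v₀ v₁) := by
  have htri : IsTriangularAlong (coordFlag R (m + 3)) (chainWeight c 1 1 0) (chainHom c v₀ v₁) :=
    isTriangularAlong_chainWeight hc (by simpa using chainHom_chainShift hc h0 h1)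
      (by simpa [chainHom_single_zero] using hv₀) (by simpa [chainHom_single_one] using hv₁)
  rwa [show chainWeight c (1 : R) 1 0 = 1 from funext (chainWeight_one_one_zero c)] at htri

lemma chainHom_apply_zero (hc : c = 0 ∨ c = 1) (hv₀ : v₀ 0 = 1) (hv₁ : v₁ 0 = 0)
    (h0 : c ≠ 0 → chainShift R c v₀ = 0) (h1 : c ≠ 1 → chainShift R c v₁ = 0)
    (u : Fin (m + 3) → R) : chainHom c v₀ v₁ u 0 = u 0 := by
  suffices hcomp : LinearMap.proj 0 ∘ₗ chainHom c v₀ v₁ =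
      (LinearMap.proj 0 : (Fin (m + 3) → R) →ₗ[R] R) from LinearMap.congr_fun hcomp u
  refine chain_hom_ext hc ?_ ?_ fun u _ ↦ ?_
  · simpa [chainHom_single_zero] using hv₀
  · simpa [chainHom_single_one] using hv₁
  · simp [chainHom_chainShift hc h0 h1]

lemma IsChainDerivation.apply_chainHom {D : Module.End R (Fin (m + 3) → R)} (hc : c = 0 ∨ c = 1)
    (hD : IsChainDerivation c D) {β : R} (hDv₀ : D v₀ = D (Pi.single 0 1) 0 • v₀)
    (hDv₁ : D v₁ = β • v₁) (h0 : c ≠ 0 → chainShift R c v₀ = 0)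
    (h1 : c ≠ 1 → chainShift R c v₁ = 0) (u : Fin (m + 3) → R) :
    D (chainHom c v₀ v₁ u) = chainHom c v₀ v₁ ((fun j : Fin (m + 3) ↦
      chainWeight c (D (Pi.single 0 1) 0) β (D (Pi.single 0 1) 0) j) * u) := by
  set α := D (Pi.single 0 1) 0
  let w : Fin (m + 3) → R := fun j ↦ chainWeight c α β α j
  have hAS := chainHom_chainShift hc h0 h1
  suffices hcomp : D ∘ₗ chainHom c v₀ v₁ = chainHom c v₀ v₁ ∘ₗ LinearMap.mulLeft R w from
    LinearMap.congr_fun hcomp u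
  refine chain_hom_ext hc ?_ ?_ fun u hu ↦ ?_
  · rw [LinearMap.comp_apply, LinearMap.comp_apply, LinearMap.mulLeft_apply, mul_single_one,
      map_smul, chainHom_single_zero, hDv₀]
    simp [w, chainWeight]
  · rw [LinearMap.comp_apply, LinearMap.comp_apply, LinearMap.mulLeft_apply, mul_single_one,
      map_smul, chainHom_single_one, hDv₁]
    simp [w, chainWeight]
  · have hu' : D (chainHom c v₀ v₁ u) = chainHom c v₀ v₁ (w * u) := hu
    change D (chainHom c v₀ v₁ (chainShift R c u)) = chainHom c v₀ v₁ (w * chainShift R c u)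
    rw [hAS, hD.apply_chainShift, hu', chainShift_chainWeight_mul hc, map_add, map_smul, hAS, hAS]

/-- The weights of a derivation with `α = 1` and `β = m + 3`: they are nonzero, pairwise distinct,
and those of the chain do not follow the weight of the generator outside the chain. -/
def regularWeight {m : ℕ} (c : Fin (m + 3)) : ℕ → ℕ :=
  chainWeight c 1 (m + 3) 1

lemma cast_regularWeight (c : Fin (m + 3)) (k : ℕ) :
    (regularWeight c k : R) = chainWeight c 1 (m + 3 : R) 1 k := by
  obtain _ | _ | k := k <;> simp [regularWeight, chainWeight]

lemma regularWeight_ne_zero (c : Fin (m + 3)) (k : ℕ) : regularWeight c k ≠ 0 := by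
  obtain _ | _ | k := k <;> simp [regularWeight, chainWeight]

lemma regularWeight_ne {j k : ℕ} (hj : j < m + 3) (hk : k < m + 3) (hjk : j ≠ k) :
    regularWeight c j ≠ regularWeight c k := by
  by_cases hc : c = 0 <;> obtain _ | _ | j := j <;> obtain _ | _ | k := k <;>
    simp [regularWeight, chainWeight, hc] <;> omega

lemma regularWeight_ne_add_one (hc : c = 0 ∨ c = 1) {g : Fin (m + 3)} (hg : g = 0 ∨ g = 1)
    (hgc : c ≠ g) {k : ℕ} (hk : k + 2 < m + 3) :
    regularWeight c (k + 2) ≠ regularWeight c g + 1 := by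
  rcases hc with rfl | rfl <;> rcases hg with rfl | rfl <;>
    simp [regularWeight, chainWeight] at hgc ⊢ <;> omega

end CommRing

section Field

variable {K : Type*} [Field K] {m : ℕ} {c : Fin (m + 3)}

namespace IsChainDerivation

variable {D : Module.End K (Fin (m + 3) → K)}

lemma isTriangularAlong_regularWeight (hc : c = 0 ∨ c = 1) (hD : IsChainDerivation c D)
    (h0 : D (Pi.single 0 1) 0 = 1) (h1 : D (Pi.single 1 1) 1 = m + 3) :
    IsTriangularAlong (coordFlag K (m + 3)) (fun k ↦ (regularWeight c k : K)) D := by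
  simpa only [cast_regularWeight, h0, h1] using hD.isTriangularAlong hc

variable [CharZero K]

/-- `S v` has the weight of `v` plus one, which does not occur on the span of the chain. -/
lemma chainShift_eq_zero_of_eigenvector (hc : c = 0 ∨ c = 1) (hD : IsChainDerivation c D)
    (h0 : D (Pi.single 0 1) 0 = 1) (h1 : D (Pi.single 1 1) 1 = m + 3) {g : Fin (m + 3)}
    (hg : g = 0 ∨ g = 1) (hgc : c ≠ g) {v : Fin (m + 3) → K}
    (hv : D v = (regularWeight c g : K) • v) : chainShift K c v = 0 := by
  refine (hD.isTriangularAlong_regularWeight hc h0 h1).eq_zero_of_apply_eq_smul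
    (m := 2) (n := m + 3) (μ := (regularWeight c g + 1 : ℕ)) (by omega) coordFlag_self
    (chainShift_mem_coordFlag_two v) ?_ fun k hk hkm ↦ ?_
  · rw [hD.apply_chainShift, hv, h0, map_smul, Nat.cast_succ, add_smul]
  · obtain ⟨k, rfl⟩ := Nat.exists_eq_add_of_le' hk
    exact Nat.cast_injective.ne (regularWeight_ne_add_one hc hg hgc hkm)

lemma exists_eigenvector (hc : c = 0 ∨ c = 1) (hD : IsChainDerivation c D)
    (h0 : D (Pi.single 0 1) 0 = 1) (h1 : D (Pi.single 1 1) 1 = m + 3) (k : Fin (m + 3)) :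
    ∃ v, v - Pi.single k 1 ∈ coordFlag K (m + 3) (k + 1) ∧ D v = (regularWeight c k : K) • v :=
  (hD.isTriangularAlong_regularWeight hc h0 h1).exists_apply_eq_smul coordFlag_antitone
    k.isLt coordFlag_self
    (fun _ hkj hj ↦ Nat.cast_injective.ne (regularWeight_ne hj k.isLt hkj.ne'))
    (single_mem_coordFlag k)

lemma exists_diagonalization (hc : c = 0 ∨ c = 1) (hD : IsChainDerivation c D)
    (h0 : D (Pi.single 0 1) 0 = 1) (h1 : D (Pi.single 1 1) 1 = m + 3) :
    ∃ A : Module.End K (Fin (m + 3) → K), Function.Injective A ∧ (∀ u, A u 0 = u 0) ∧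
      (∀ u, A (chainShift K c u) = chainShift K c (A u)) ∧
      ∀ u, D (A u) = A ((fun j : Fin (m + 3) ↦ (regularWeight c j : K)) * u) := by
  obtain ⟨v₀, hv₀, hDv₀⟩ := hD.exists_eigenvector hc h0 h1 0
  obtain ⟨v₁, hv₁, hDv₁⟩ := hD.exists_eigenvector hc h0 h1 1
  have hS0 (hc0 : c ≠ 0) : chainShift K c v₀ = 0 :=
    hD.chainShift_eq_zero_of_eigenvector hc h0 h1 (Or.inl rfl) hc0 hDv₀
  have hS1 (hc1 : c ≠ 1) : chainShift K c v₁ = 0 :=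
    hD.chainShift_eq_zero_of_eigenvector hc h0 h1 (Or.inr rfl) hc1 hDv₁
  have htri := chainHom_isTriangularAlong hc hv₀ hv₁ hS0 hS1
  refine ⟨chainHom c v₀ v₁, (injective_iff_map_eq_zero _).2 fun u hu ↦ ?_,
    chainHom_apply_zero hc ?_ ?_ hS0 hS1, chainHom_chainShift hc hS0 hS1, ?_⟩
  · exact htri.eq_zero_of_apply_eq_smul (m := 0) (Nat.zero_le _) coordFlag_self
      (mem_coordFlag.2 (by simp)) (hu.trans (zero_smul K u).symm) (by simp)
  · simpa [sub_eq_zero] using mem_coordFlag.1 hv₀ 0 (by simp)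
  · simpa [sub_eq_zero] using mem_coordFlag.1 hv₁ 0 (by simp)
  · have hDA := hD.apply_chainHom (β := m + 3) hc
      (by simpa [h0, regularWeight, chainWeight] using hDv₀)
      (by simpa [regularWeight, chainWeight] using hDv₁) hS0 hS1
    simpa only [h0, ← cast_regularWeight] using hDA

end IsChainDerivation

end Field

end Chain

section LeibnizAlgebra

variable {L : Type*} [AddCommGroup L] [Module ℂ L] {b : L →ₗ[ℂ] L →ₗ[ℂ] L}

lemma bracket_mem_bracketSpan {A B : Submodule ℂ L} {u v : L} (hu : u ∈ A) (hv : v ∈ B) :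
    b u v ∈ bracketSpan b A B :=
  Submodule.subset_span ⟨u, hu, v, hv, rfl⟩

lemma bracketSpan_le {A B C : Submodule ℂ L} :
    bracketSpan b A B ≤ C ↔ ∀ u ∈ A, ∀ v ∈ B, b u v ∈ C := by
  refine ⟨fun h u hu v hv ↦ h (bracket_mem_bracketSpan hu hv), fun h ↦ Submodule.span_le.2 ?_⟩
  rintro _ ⟨u, hu, v, hv, rfl⟩
  exact h u hu v hv

lemma bracketSpan_mono {A A' B B' : Submodule ℂ L} (hA : A ≤ A') (hB : B ≤ B') :
    bracketSpan b A B ≤ bracketSpan b A' B' :=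
  bracketSpan_le.2 fun _ hu _ hv ↦ bracket_mem_bracketSpan (hA hu) (hB hv)

lemma isLeibnizIdeal_of_bracketSpan_top_le {J : Submodule ℂ L} (hJ : bracketSpan b ⊤ ⊤ ≤ J) :
    IsLeibnizIdeal b J :=
  ⟨(bracketSpan_mono le_top le_rfl).trans hJ, (bracketSpan_mono le_rfl le_top).trans hJ⟩

namespace IsLeibnizBracket

lemma bracket_bracket (hb : IsLeibnizBracket b) (u v w : L) :
    b u (b v w) = b (b u v) w - b (b u w) v := by
  rw [hb u v w, add_sub_cancel_left]

lemma bracket_add_bracket_swap (hb : IsLeibnizBracket b) (a u v : L) :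
    b a (b u v + b v u) = 0 := by
  rw [map_add, hb.bracket_bracket, hb.bracket_bracket, sub_add_sub_cancel, sub_self]

lemma isLeibnizIdeal_bracketSpan_self (hb : IsLeibnizBracket b) {I : Submodule ℂ L}
    (hI : IsLeibnizIdeal b I) : IsLeibnizIdeal b (bracketSpan b I I) := by
  have hright {u : L} (hu : u ∈ I) (a : L) : b u a ∈ I :=
    hI.1 (bracket_mem_bracketSpan hu Submodule.mem_top)
  have hleft (a : L) {u : L} (hu : u ∈ I) : b a u ∈ I :=
    hI.2 (bracket_mem_bracketSpan Submodule.mem_top hu)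
  refine ⟨bracketSpan_le.2 fun z hz a _ ↦ ?_, bracketSpan_le.2 fun a _ z hz ↦ ?_⟩
  · suffices hle : bracketSpan b I I ≤ (bracketSpan b I I).comap (b.flip a) from hle hz
    refine bracketSpan_le.2 fun u hu v hv ↦ ?_
    rw [Submodule.mem_comap, LinearMap.flip_apply, hb u v a]
    exact add_mem (bracket_mem_bracketSpan (hright hu a) hv)
      (bracket_mem_bracketSpan hu (hright hv a))
  · suffices hle : bracketSpan b I I ≤ (bracketSpan b I I).comap (b a) from hle hz
    refine bracketSpan_le.2 fun u hu v hv ↦ ?_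
    rw [Submodule.mem_comap, hb.bracket_bracket]
    exact sub_mem (bracket_mem_bracketSpan (hleft a hu) hv)
      (bracket_mem_bracketSpan (hleft a hv) hu)

lemma isLeibnizIdeal_leibnizDerivedSeries (hb : IsLeibnizBracket b) (s : ℕ) :
    IsLeibnizIdeal b (leibnizDerivedSeries b s) := by
  induction s with
  | zero => exact ⟨le_top, le_top⟩
  | succ s ih => exact hb.isLeibnizIdeal_bracketSpan_self ih

end IsLeibnizBracket

namespace IsNilradical

variable {N : Submodule ℂ L} {G : ℕ → Submodule ℂ L} {n : ℕ}

lemma le_of_bracketSpan_self_le (hN : IsNilradical b N) (hNG : N ≤ G 0) (hGn : G n = ⊥)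
    {J : Submodule ℂ L} (hJ : IsLeibnizIdeal b J)
    (hJG : ∀ k, ∀ u ∈ G k, ∀ a ∈ J, b u a ∈ G (k + 1)) (hJJ : bracketSpan b J J ≤ N) :
    J ≤ N := by
  have hlower (k : ℕ) : lowerCentral b J (k + 1) ≤ G k := by
    induction k with
    | zero => exact hJJ.trans hNG
    | succ k ih => exact bracketSpan_le.2 fun u hu a ha ↦ hJG k u (ih hu) a ha
  exact hN.2.2 J hJ ⟨n + 1, eq_bot_iff.2 (hGn ▸ hlower n)⟩

/-- Descending along the derived series, each term `J` with `[J, J] ≤ N` is a nilpotent ideal. -/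
lemma bracketSpan_top_le (hb : IsLeibnizBracket b) (hsolv : IsSolvableBracket b)
    (hN : IsNilradical b N) (hNG : N ≤ G 0) (hGn : G n = ⊥)
    (hG : ∀ k, ∀ u ∈ G k, ∀ a ∈ bracketSpan b ⊤ ⊤, b u a ∈ G (k + 1)) :
    bracketSpan b ⊤ ⊤ ≤ N := by
  have hdescent (s : ℕ) (hs : leibnizDerivedSeries b (s + 1) ≤ N) : bracketSpan b ⊤ ⊤ ≤ N := by
    induction s with
    | zero => exact hs
    | succ s ih =>
      have hle : leibnizDerivedSeries b (s + 1) ≤ bracketSpan b ⊤ ⊤ :=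
        bracketSpan_mono le_top le_top
      exact ih (hN.le_of_bracketSpan_self_le hNG hGn (hb.isLeibnizIdeal_leibnizDerivedSeries _)
        (fun k u hu a ha ↦ hG k u hu a (hle ha)) hs)
  obtain ⟨s, hs⟩ := hsolv
  exact hdescent s (bracketSpan_le.2 fun u hu v _ ↦ by simp_all)

lemma le_of_bracket_mem_filtration (hb : IsLeibnizBracket b) (hsolv : IsSolvableBracket b)
    (hN : IsNilradical b N) (hNG : N ≤ G 0) (hGn : G n = ⊥) {T : Submodule ℂ L}
    (hT : bracketSpan b ⊤ ⊤ ≤ T) (hTG : ∀ k, ∀ u ∈ G k, ∀ a ∈ T, b u a ∈ G (k + 1)) : T ≤ N :=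
  hN.le_of_bracketSpan_self_le hNG hGn (isLeibnizIdeal_of_bracketSpan_top_le hT) hTG <|
    (bracketSpan_mono le_top le_top).trans <|
      bracketSpan_top_le hb hsolv hN hNG hGn fun k u hu a ha ↦ hTG k u hu a (hT ha)

end IsNilradical

/-- The linear map `ψ` identifies the filiform algebra with bracket `[u, v] = v 0 • S u`, where `S`
is the shift along the chain of `e_c`, with the nilradical of the Leibniz algebra `(L, b)`. -/
structure IsFiliformNilradical {m : ℕ} (b : L →ₗ[ℂ] L →ₗ[ℂ] L) (c : Fin (m + 3))
    (ψ : (Fin (m + 3) → ℂ) →ₗ[ℂ] L) : Prop where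
  isLeibnizBracket : IsLeibnizBracket b
  eq_zero_or_eq_one : c = 0 ∨ c = 1
  injective : Function.Injective ψ
  map_smul_chainShift (u v : Fin (m + 3) → ℂ) : ψ (v 0 • chainShift ℂ c u) = b (ψ u) (ψ v)
  isNilradical_range : IsNilradical b (LinearMap.range ψ)

/-- Right multiplication by elements of `L`, transported along an embedding `ψ` of an ideal. -/
noncomputable def rightAction {V : Type*} [AddCommGroup V] [Module ℂ V] (b : L →ₗ[ℂ] L →ₗ[ℂ] L)
    (ψ : V →ₗ[ℂ] L) : L →ₗ[ℂ] Module.End ℂ V :=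
  (b.flip.compl₂ ψ).compr₂ ψ.leftInverse

/-- The diagonal entries at the generators `e_0` and `e_1` of the right action on the nilradical;
they determine all other diagonal entries. -/
noncomputable def generatorWeights {m : ℕ} (b : L →ₗ[ℂ] L →ₗ[ℂ] L)
    (ψ : (Fin (m + 3) → ℂ) →ₗ[ℂ] L) : L →ₗ[ℂ] ℂ × ℂ where
  toFun a := (rightAction b ψ a (Pi.single 0 1) 0, rightAction b ψ a (Pi.single 1 1) 1)
  map_add' := by simp
  map_smul' := by simp

namespace IsFiliformNilradical

variable {m : ℕ} {c : Fin (m + 3)} {ψ : (Fin (m + 3) → ℂ) →ₗ[ℂ] L}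

lemma apply_leftInverse (hψ : IsFiliformNilradical b c ψ) {z : L} (hz : z ∈ LinearMap.range ψ) :
    ψ (ψ.leftInverse z) = z := by
  obtain ⟨v, rfl⟩ := hz
  rw [ψ.leftInverse_apply_of_inj (LinearMap.ker_eq_bot.2 hψ.injective)]

lemma apply_rightAction (hψ : IsFiliformNilradical b c ψ) (a : L) (u : Fin (m + 3) → ℂ) :
    ψ (rightAction b ψ a u) = b (ψ u) a :=
  hψ.apply_leftInverse <|
    hψ.isNilradical_range.1.1 (bracket_mem_bracketSpan ⟨u, rfl⟩ Submodule.mem_top)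

lemma rightAction_apply_apply (hψ : IsFiliformNilradical b c ψ) (u v : Fin (m + 3) → ℂ) :
    rightAction b ψ (ψ v) u = v 0 • chainShift ℂ c u :=
  hψ.injective <| by rw [hψ.apply_rightAction, hψ.map_smul_chainShift]

lemma rightAction_bracket (hψ : IsFiliformNilradical b c ψ) (a a' : L) :
    rightAction b ψ (b a a') =
      rightAction b ψ a' * rightAction b ψ a - rightAction b ψ a * rightAction b ψ a' := by
  refine LinearMap.ext fun u ↦ hψ.injective ?_
  simp only [LinearMap.sub_apply, Module.End.mul_apply, map_sub, hψ.apply_rightAction,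
    hψ.isLeibnizBracket.bracket_bracket]

lemma isChainDerivation_rightAction (hψ : IsFiliformNilradical b c ψ) (a : L) :
    IsChainDerivation c (rightAction b ψ a) := by
  intro u v
  refine hψ.injective ?_
  rw [map_add, hψ.apply_rightAction, hψ.map_smul_chainShift, hψ.map_smul_chainShift,
    hψ.map_smul_chainShift, hψ.apply_rightAction, hψ.apply_rightAction, hψ.isLeibnizBracket]

lemma isTriangularAlong_rightAction (hψ : IsFiliformNilradical b c ψ) (a : L) :
    IsTriangularAlong (coordFlag ℂ (m + 3)) (chainWeight c (generatorWeights b ψ a).1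
      (generatorWeights b ψ a).2 (generatorWeights b ψ a).1) (rightAction b ψ a) :=
  (hψ.isChainDerivation_rightAction a).isTriangularAlong hψ.eq_zero_or_eq_one

lemma generatorWeights_apply (hψ : IsFiliformNilradical b c ψ) (v : Fin (m + 3) → ℂ) :
    generatorWeights b ψ (ψ v) = 0 := by
  have hdiag {j : Fin (m + 3)} (hj : (j : ℕ) < 2) :
      rightAction b ψ (ψ v) (Pi.single j 1) j = 0 := by
    rw [hψ.rightAction_apply_apply, Pi.smul_apply, chainShift_apply, if_neg (by omega),
      if_neg (by omega), smul_zero]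
  exact Prod.ext (hdiag (by simp)) (hdiag (by simp))

lemma generatorWeights_bracket (hψ : IsFiliformNilradical b c ψ) (a a' : L) :
    generatorWeights b ψ (b a a') = 0 := by
  have htri := (hψ.isTriangularAlong_rightAction a').commutator coordFlag_antitone
    (hψ.isTriangularAlong_rightAction a)
  rw [← hψ.rightAction_bracket] at htri
  exact Prod.ext (htri.apply_single_self 0) (htri.apply_single_self 1)

lemma ker_generatorWeights_le (hψ : IsFiliformNilradical b c ψ) (hsolv : IsSolvableBracket b) :
    LinearMap.ker (generatorWeights b ψ) ≤ LinearMap.range ψ := by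
  refine hψ.isNilradical_range.le_of_bracket_mem_filtration hψ.isLeibnizBracket hsolv
    (G := fun k ↦ (coordFlag ℂ (m + 3) k).map ψ) (n := m + 3) ?_ (by simp [coordFlag_self])
    (bracketSpan_le.2 fun a _ a' _ ↦ hψ.generatorWeights_bracket a a') ?_
  · rintro _ ⟨u, rfl⟩
    exact ⟨u, mem_coordFlag.2 (by simp), rfl⟩
  · rintro k _ ⟨u, hu, rfl⟩ a ha
    refine ⟨rightAction b ψ a u, ?_, hψ.apply_rightAction a u⟩
    have htri := hψ.isTriangularAlong_rightAction a k u hu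
    rw [LinearMap.mem_ker.1 ha] at htri
    simpa [chainWeight_zero_zero_zero] using! htri

lemma bracket_mem_range (hψ : IsFiliformNilradical b c ψ) (hsolv : IsSolvableBracket b)
    (a a' : L) : b a a' ∈ LinearMap.range ψ :=
  hψ.ker_generatorWeights_le hsolv (hψ.generatorWeights_bracket a a')

lemma generatorWeights_surjective (hψ : IsFiliformNilradical b c ψ) (hsolv : IsSolvableBracket b)
    (hdim : Module.finrank ℂ L = m + 5) : Function.Surjective (generatorWeights b ψ) := by
  have : FiniteDimensional ℂ L := Module.finite_of_finrank_pos (by omega)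
  have hker := Submodule.finrank_mono (hψ.ker_generatorWeights_le hsolv)
  have hrange := LinearMap.finrank_range_of_inj hψ.injective
  have hrank := LinearMap.finrank_range_add_finrank_ker (generatorWeights b ψ)
  rw [Module.finrank_fin_fun] at hrange
  refine LinearMap.range_eq_top.1 (Submodule.eq_top_of_finrank_eq (le_antisymm
    (Submodule.finrank_le _) ?_))
  rw [Module.finrank_prod, Module.finrank_self]
  omega

lemma comp (hψ : IsFiliformNilradical b c ψ) {A : Module.End ℂ (Fin (m + 3) → ℂ)}
    (hA : Function.Injective A) (hA0 : ∀ u, A u 0 = u 0)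
    (hAS : ∀ u, A (chainShift ℂ c u) = chainShift ℂ c (A u)) :
    IsFiliformNilradical b c (ψ ∘ₗ A) where
  isLeibnizBracket := hψ.isLeibnizBracket
  eq_zero_or_eq_one := hψ.eq_zero_or_eq_one
  injective := hψ.injective.comp hA
  map_smul_chainShift u v := by
    simp only [LinearMap.comp_apply, ← hψ.map_smul_chainShift, hA0, map_smul, hAS]
  isNilradical_range := by
    rw [LinearMap.range_comp_of_range_eq_top ψ
      (LinearMap.range_eq_top.2 (LinearMap.surjective_of_injective hA))]
    exact hψ.isNilradical_range

lemma exists_bracket_eq_regularWeight_mul (hψ : IsFiliformNilradical b c ψ)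
    (hsurj : Function.Surjective (generatorWeights b ψ)) :
    ∃ ψ' h, IsFiliformNilradical b c ψ' ∧
      ∀ u, b (ψ' u) h = ψ' ((fun j : Fin (m + 3) ↦ (regularWeight c j : ℂ)) * u) := by
  obtain ⟨h, hh⟩ := hsurj (1, m + 3)
  obtain ⟨A, hA, hA0, hAS, hDA⟩ := (hψ.isChainDerivation_rightAction h).exists_diagonalization
    hψ.eq_zero_or_eq_one (congrArg Prod.fst hh) (congrArg Prod.snd hh)
  refine ⟨ψ ∘ₗ A, h, hψ.comp hA hA0 hAS, fun u ↦ ?_⟩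
  rw [LinearMap.comp_apply, LinearMap.comp_apply, ← hDA, hψ.apply_rightAction]

end IsFiliformNilradical

/-- Multiplication by `a` is diagonal in the coordinates given by `ψ`, with entries `P` from the
right and `p` from the left. -/
structure ActsDiagonally {ι : Type*} (b : L →ₗ[ℂ] L →ₗ[ℂ] L) (ψ : (ι → ℂ) →ₗ[ℂ] L) (P p : ι → ℂ)
    (a : L) : Prop where
  bracket_right (u : ι → ℂ) : b (ψ u) a = ψ (P * u)
  bracket_left (u : ι → ℂ) : b a (ψ u) = ψ (p * u)

section RegularElement

variable {m : ℕ} {c : Fin (m + 3)} {ψ : (Fin (m + 3) → ℂ) →ₗ[ℂ] L} {w : Fin (m + 3) → ℂ} {h : L}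

namespace IsFiliformNilradical

lemma eq_zero_of_bracket_eq_zero (hψ : IsFiliformNilradical b c ψ)
    (hh : ∀ u, b (ψ u) h = ψ (w * u)) (hw : ∀ j, w j ≠ 0) {z : L} (hz : z ∈ LinearMap.range ψ)
    (hzh : b z h = 0) : z = 0 := by
  obtain ⟨u, rfl⟩ := hz
  have hwu : w * u = 0 := hψ.injective (by rw [← hh, hzh, map_zero])
  have hu : u = 0 := funext fun j ↦ (mul_eq_zero.1 (congrFun hwu j)).resolve_left (hw j)
  rw [hu, map_zero]

lemma exists_generatorWeights_eq_and_bracket_eq_zero (hψ : IsFiliformNilradical b c ψ)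
    (hsolv : IsSolvableBracket b) (hh : ∀ u, b (ψ u) h = ψ (w * u)) (hw : ∀ j, w j ≠ 0) (a : L) :
    ∃ a', generatorWeights b ψ a' = generatorWeights b ψ a ∧ b a' h = 0 := by
  obtain ⟨a', ⟨v, hv⟩, ha'⟩ := exists_sub_mem_and_apply_eq_zero (f := b.flip h)
    (fun u ↦ hψ.bracket_mem_range hsolv u h)
    (fun u hu huh ↦ hψ.eq_zero_of_bracket_eq_zero hh hw hu huh) a
  refine ⟨a', ?_, ha'⟩
  rw [← sub_eq_zero, ← map_sub, ← hv, hψ.generatorWeights_apply]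

lemma bracket_eq_zero (hψ : IsFiliformNilradical b c ψ) (hsolv : IsSolvableBracket b)
    (hh : ∀ u, b (ψ u) h = ψ (w * u)) (hw : ∀ j, w j ≠ 0) {a a' : L} (ha : b a h = 0)
    (ha' : b a' h = 0) : b a a' = 0 :=
  hψ.eq_zero_of_bracket_eq_zero hh hw (hψ.bracket_mem_range hsolv a a') <| by
    rw [hψ.isLeibnizBracket, ha, ha', map_zero, map_zero, LinearMap.zero_apply, add_zero]

lemma exists_actsDiagonally (hψ : IsFiliformNilradical b c ψ)
    (hh : ∀ u, b (ψ u) h = ψ (w * u)) (hw : Function.Injective w) {a : L} {α β : ℂ}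
    (hweights : generatorWeights b ψ a = (α, β)) (ha : b a h = 0) :
    ∃ p, ActsDiagonally b ψ (fun j ↦ chainWeight c α β α j) p a := by
  have hLeib := hψ.isLeibnizBracket
  have hleft (u : Fin (m + 3) → ℂ) : ψ (ψ.leftInverse (b a (ψ u))) = b a (ψ u) :=
    hψ.apply_leftInverse <|
      hψ.isNilradical_range.1.2 (bracket_mem_bracketSpan Submodule.mem_top ⟨u, rfl⟩)
  have hannihilates (u : Fin (m + 3) → ℂ) : b (ψ u) (b h a) = 0 := by
    simpa [ha] using hLeib.bracket_add_bracket_swap (ψ u) a h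
  obtain ⟨P, hP⟩ := exists_forall_apply_eq_mul hw (f := rightAction b ψ a) fun u ↦
    hψ.injective <| by
      rw [hψ.apply_rightAction, ← hh, ← hh, hψ.apply_rightAction, hLeib, hannihilates, add_zero]
  obtain ⟨p, hp⟩ := exists_forall_apply_eq_mul hw (f := ψ.leftInverse ∘ₗ b a ∘ₗ ψ) fun u ↦
    hψ.injective <| by
      rw [← hh]
      simp only [LinearMap.comp_apply, hleft]
      rw [← hh, hLeib.bracket_bracket, ha, map_zero, LinearMap.zero_apply, sub_zero]
  have hPdiag : P = fun j : Fin (m + 3) ↦ chainWeight c α β α j := funext fun j ↦ by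
    simpa [hP, hweights] using (hψ.isTriangularAlong_rightAction a).apply_single_self j
  exact ⟨p, fun u ↦ by rw [← hPdiag, ← hP, hψ.apply_rightAction],
    fun u ↦ by rw [← hp, ← hleft, LinearMap.comp_apply, LinearMap.comp_apply]⟩

end IsFiliformNilradical

end RegularElement

namespace ActsDiagonally

variable {m : ℕ} {c : Fin (m + 3)} {ψ : (Fin (m + 3) → ℂ) →ₗ[ℂ] L} {P p : Fin (m + 3) → ℂ} {a : L}

lemma left_apply_zero (hψ : IsFiliformNilradical b c ψ) (ha : ActsDiagonally b ψ P p a) :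
    p 0 = -P 0 := by
  have hswap := hψ.isLeibnizBracket.bracket_add_bracket_swap (ψ (Pi.single c 1))
    (ψ (Pi.single 0 1)) a
  rw [ha.bracket_right, ha.bracket_left, ← map_add, ← hψ.map_smul_chainShift] at hswap
  have hcoord := congrFun ((map_eq_zero_iff ψ hψ.injective).1 hswap) ⟨2, by omega⟩
  rw [Pi.smul_apply, chainShift_apply_two] at hcoord
  simpa [eq_neg_iff_add_eq_zero, add_comm] using hcoord

lemma left_apply_one_mul (hψ : IsFiliformNilradical b c ψ) (ha : ActsDiagonally b ψ P p a) :
    p 1 * (P 1 + p 1) = 0 := by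
  have hswap := hψ.isLeibnizBracket.bracket_add_bracket_swap a (ψ (Pi.single 1 1)) a
  rw [ha.bracket_right, ha.bracket_left, ← map_add, ha.bracket_left] at hswap
  simpa using congrFun ((map_eq_zero_iff ψ hψ.injective).1 hswap) 1

lemma left_apply_add_two (hψ : IsFiliformNilradical b c ψ) (ha : ActsDiagonally b ψ P p a)
    {k : ℕ} (hk : k + 2 < m + 3) : p ⟨k + 2, hk⟩ = 0 := by
  have hswap := hψ.isLeibnizBracket.bracket_add_bracket_swap a (ψ 1) (ψ (Pi.single 0 1))
  rw [← hψ.map_smul_chainShift, ← hψ.map_smul_chainShift, ← map_add, ha.bracket_left] at hswap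
  have hcoord := congrFun ((map_eq_zero_iff ψ hψ.injective).1 hswap) ⟨k + 2, hk⟩
  obtain _ | k := k
  · rcases hψ.eq_zero_or_eq_one with rfl | rfl
    · simpa [chainShift_apply, ← two_mul] using hcoord
    · simpa [chainShift_apply] using hcoord
  · simpa [chainShift_apply] using hcoord

lemma left_apply_one_eq_zero (hψ : IsFiliformNilradical b 1 ψ) (ha : ActsDiagonally b ψ P p a) :
    p 1 = 0 := by
  have hbracket := hψ.isLeibnizBracket.bracket_bracket a (ψ (Pi.single 1 1)) (ψ (Pi.single 0 1))
  rw [← hψ.map_smul_chainShift, ha.bracket_left, ha.bracket_left, ha.bracket_left,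
    ← hψ.map_smul_chainShift, ← hψ.map_smul_chainShift, ← map_sub] at hbracket
  simpa [chainShift_apply, ha.left_apply_add_two hψ, eq_comm] using
    congrFun (hψ.injective hbracket) ⟨2, by omega⟩

lemma left_eq (hψ : IsFiliformNilradical b c ψ) (ha : ActsDiagonally b ψ P p a) :
    p = Pi.single 0 (-P 0) + Pi.single 1 (p 1) := by
  ext ⟨k, hk⟩
  obtain _ | _ | k := k
  · simpa using ha.left_apply_zero hψ
  · simp
  · rw [ha.left_apply_add_two hψ hk, Pi.add_apply, Pi.single_eq_of_ne, Pi.single_eq_of_ne,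
      add_zero] <;> simp [Fin.ext_iff]

end ActsDiagonally

end LeibnizAlgebra

section DiagonalExtension

variable {n : ℕ}

/-- The vector of `Fin (n + 2) → ℂ` with first coordinate `α` and last coordinate `β`, the
coordinates along `x` and `y` in the model algebras, and coordinates `z` on the nilradical. -/
def modelVector (α : ℂ) (z : Fin n → ℂ) (β : ℂ) : Fin (n + 2) → ℂ :=
  Fin.cons α (Fin.snoc (α := fun _ ↦ ℂ) z β)

/-- The coordinates on the nilradical of a vector in the model algebras. -/
def nilCoords : (Fin (n + 2) → ℂ) →ₗ[ℂ] Fin n → ℂ :=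
  LinearMap.funLeft ℂ ℂ fun k ↦ k.castSucc.succ

@[simp]
lemma modelVector_zero (α : ℂ) (z : Fin n → ℂ) (β : ℂ) : modelVector α z β 0 = α :=
  rfl

@[simp]
lemma modelVector_last (α : ℂ) (z : Fin n → ℂ) (β : ℂ) :
    modelVector α z β (Fin.last (n + 1)) = β := by
  rw [modelVector, ← Fin.succ_last, Fin.cons_succ, Fin.snoc_last]

@[simp]
lemma nilCoords_modelVector (α : ℂ) (z : Fin n → ℂ) (β : ℂ) : nilCoords (modelVector α z β) = z :=
  funext fun k ↦ by simp [nilCoords, LinearMap.funLeft_apply, modelVector]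

lemma eq_modelVector {u : Fin (n + 2) → ℂ} {α β : ℂ} {z : Fin n → ℂ} (h0 : u 0 = α)
    (hz : ∀ k : Fin n, u k.castSucc.succ = z k) (hlast : u (Fin.last (n + 1)) = β) :
    u = modelVector α z β := by
  ext k
  cases k using Fin.cases with
  | zero => simpa using h0
  | succ k =>
    cases k using Fin.lastCases with
    | last => simpa using hlast
    | cast k => simpa [modelVector] using hz k

/-- The extension of an algebra with bracket `F` by elements `x` (first coordinate) and `y` (last
coordinate) with zero mutual brackets which act diagonally on it, with entries `rx` and `ry` from
the right, `lx` and `ly` from the left. -/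
def diagonalExtension (F : (Fin n → ℂ) → (Fin n → ℂ) → Fin n → ℂ) (rx lx ry ly : Fin n → ℂ)
    (u v : Fin (n + 2) → ℂ) : Fin (n + 2) → ℂ :=
  modelVector 0 (F (nilCoords u) (nilCoords v) + v 0 • (rx * nilCoords u) +
    u 0 • (lx * nilCoords v) + v (Fin.last (n + 1)) • (ry * nilCoords u) +
    u (Fin.last (n + 1)) • (ly * nilCoords v)) 0

variable {L : Type*} [AddCommGroup L] [Module ℂ L]

/-- The linear map that sends the nilradical coordinates through `ψ` and the first and last basis
vectors to `x` and `y`. -/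
def modelMap (ψ : (Fin n → ℂ) →ₗ[ℂ] L) (x y : L) : (Fin (n + 2) → ℂ) →ₗ[ℂ] L :=
  (LinearMap.proj 0).smulRight x + (LinearMap.proj (Fin.last (n + 1))).smulRight y + ψ ∘ₗ nilCoords

lemma modelMap_apply (ψ : (Fin n → ℂ) →ₗ[ℂ] L) (x y : L) (u : Fin (n + 2) → ℂ) :
    modelMap ψ x y u = u 0 • x + u (Fin.last (n + 1)) • y + ψ (nilCoords u) :=
  rfl

lemma modelMap_surjective {ψ : (Fin n → ℂ) →ₗ[ℂ] L} {x y : L}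
    (hspan : ∀ a, ∃ α β : ℂ, a - (α • x + β • y) ∈ LinearMap.range ψ) :
    Function.Surjective (modelMap ψ x y) := by
  intro a
  obtain ⟨α, β, z, hz⟩ := hspan a
  exact ⟨modelVector α z β, by simp [modelMap_apply, hz]⟩

section Bracket

variable {b : L →ₗ[ℂ] L →ₗ[ℂ] L} {F : (Fin n → ℂ) → (Fin n → ℂ) → Fin n → ℂ}
  {ψ : (Fin n → ℂ) →ₗ[ℂ] L} {rx lx ry ly : Fin n → ℂ} {x y : L}

lemma modelMap_diagonalExtension (hF : ∀ u v, ψ (F u v) = b (ψ u) (ψ v))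
    (hx : ActsDiagonally b ψ rx lx x) (hy : ActsDiagonally b ψ ry ly y)
    (hxx : b x x = 0) (hxy : b x y = 0) (hyx : b y x = 0) (hyy : b y y = 0)
    (u v : Fin (n + 2) → ℂ) :
    modelMap ψ x y (diagonalExtension F rx lx ry ly u v) =
      b (modelMap ψ x y u) (modelMap ψ x y v) := by
  simp only [modelMap_apply, diagonalExtension, modelVector_zero, modelVector_last,
    nilCoords_modelVector, map_add, map_smul, LinearMap.add_apply, LinearMap.smul_apply, hF,
    hx.bracket_right, hx.bracket_left, hy.bracket_right, hy.bracket_left, hxx, hxy, hyx, hyy]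
  module

lemma exists_equiv_diagonalExtension (hF : ∀ u v, ψ (F u v) = b (ψ u) (ψ v))
    (hx : ActsDiagonally b ψ rx lx x) (hy : ActsDiagonally b ψ ry ly y)
    (hxx : b x x = 0) (hxy : b x y = 0) (hyx : b y x = 0) (hyy : b y y = 0)
    (hspan : ∀ a, ∃ α β : ℂ, a - (α • x + β • y) ∈ LinearMap.range ψ)
    (hdim : Module.finrank ℂ L = n + 2) :
    ∃ φ : L ≃ₗ[ℂ] (Fin (n + 2) → ℂ),
      ∀ u v, φ (b u v) = diagonalExtension F rx lx ry ly (φ u) (φ v) := by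
  have : FiniteDimensional ℂ L := Module.finite_of_finrank_pos (by omega)
  have hsurj := modelMap_surjective hspan
  have hinj : Function.Injective (modelMap ψ x y) :=
    (LinearMap.injective_iff_surjective_of_finrank_eq_finrank (by simp [hdim])).2 hsurj
  let f := LinearEquiv.ofBijective (modelMap ψ x y) ⟨hinj, hsurj⟩
  refine ⟨f.symm, fun u v ↦ f.symm_apply_eq.2 ?_⟩
  have hbracket := modelMap_diagonalExtension hF hx hy hxx hxy hyx hyy (f.symm u) (f.symm v)
  rw [show modelMap ψ x y (f.symm u) = u from f.apply_symm_apply u,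
    show modelMap ψ x y (f.symm v) = v from f.apply_symm_apply v] at hbracket
  exact hbracket.symm

end Bracket

end DiagonalExtension

section Classification

variable {m : ℕ}

/-- The extension of the filiform algebra of type `c` by `x` of weights `(1, s)` and `y` of weights
`(0, 1)`, where `s` is `0` for `c = 0` and `1` for `c = 1`; on the left `x` negates `e_0`, and `y`
multiplies `e_1` by `r`. -/
def filiformExtension (c : Fin (m + 3)) (r : ℂ) (u v : Fin (m + 3 + 2) → ℂ) :
    Fin (m + 3 + 2) → ℂ :=
  diagonalExtension (fun u v ↦ v 0 • chainShift ℂ c u)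
    (fun j ↦ chainWeight c 1 (if c = 0 then 0 else 1) 1 j) (Pi.single 0 (-1))
    (fun j ↦ chainWeight c 0 1 0 j) (Pi.single 1 r) u v

lemma fin_two_eq_mk : (2 : Fin (m + 3 + 2)) = ⟨2, by omega⟩ :=
  Fin.ext (Fin.val_two (n := m + 2))

lemma bracketR1_eq_filiformExtension (u v : Fin (m + 3 + 2) → ℂ) :
    bracketR1 (m + 3) u v = filiformExtension 1 0 u v := by
  refine eq_modelVector (by simp [bracketR1]) (fun k ↦ ?_) (by simp [bracketR1])
  obtain ⟨_ | _ | _ | k, hk⟩ := k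
  case' succ.succ.succ => have hkm : k < m := by omega
  all_goals
    simp [bracketR1, chainShift_apply, chainWeight, nilCoords, fin_two_eq_mk, *]
    ring

lemma bracketR2_eq_filiformExtension (u v : Fin (m + 3 + 2) → ℂ) :
    bracketR2 (m + 3) u v = filiformExtension 0 (-1) u v := by
  refine eq_modelVector (by simp [bracketR2]) (fun k ↦ ?_) (by simp [bracketR2])
  obtain ⟨_ | _ | _ | k, hk⟩ := k
  case' succ.succ.succ => have hkm : k < m := by omega
  all_goals
    simp [bracketR2, chainShift_apply, chainWeight, nilCoords, fin_two_eq_mk, *]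
    ring

lemma bracketR3_eq_filiformExtension (u v : Fin (m + 3 + 2) → ℂ) :
    bracketR3 (m + 3) u v = filiformExtension 0 0 u v := by
  refine eq_modelVector (by simp [bracketR3]) (fun k ↦ ?_) (by simp [bracketR3])
  obtain ⟨_ | _ | _ | k, hk⟩ := k
  case' succ.succ.succ => have hkm : k < m := by omega
  all_goals
    simp [bracketR3, chainShift_apply, chainWeight, nilCoords, fin_two_eq_mk, *]
    ring

variable {L : Type*} [AddCommGroup L] [Module ℂ L] {b : L →ₗ[ℂ] L →ₗ[ℂ] L}

namespace IsFiliformNilradical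

variable {c : Fin (m + 3)} {ψ : (Fin (m + 3) → ℂ) →ₗ[ℂ] L}

lemma exists_sub_mem_range (hψ : IsFiliformNilradical b c ψ) (hsolv : IsSolvableBracket b)
    {x y : L} {s : ℂ} (hx : generatorWeights b ψ x = (1, s)) (hy : generatorWeights b ψ y = (0, 1))
    (a : L) : ∃ α β : ℂ, a - (α • x + β • y) ∈ LinearMap.range ψ := by
  refine ⟨(generatorWeights b ψ a).1, (generatorWeights b ψ a).2 - (generatorWeights b ψ a).1 * s,
    hψ.ker_generatorWeights_le hsolv ?_⟩
  rw [LinearMap.mem_ker, map_sub, map_add, map_smul, map_smul, hx, hy]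
  ext <;> simp

lemma left_eq_single_zero {x : L} {p : Fin (m + 3) → ℂ} (hψ : IsFiliformNilradical b c ψ)
    (hx : ActsDiagonally b ψ (fun j ↦ chainWeight c 1 (if c = 0 then 0 else 1) 1 j) p x) :
    p = Pi.single 0 (-1) := by
  have hp1 : p 1 = 0 := by
    rcases hψ.eq_zero_or_eq_one with rfl | rfl
    · simpa [chainWeight] using hx.left_apply_one_mul hψ
    · exact hx.left_apply_one_eq_zero hψ
  rw [hx.left_eq hψ, hp1]
  simp [chainWeight]

lemma exists_left_eq_single_one {y : L} {p : Fin (m + 3) → ℂ} (hψ : IsFiliformNilradical b c ψ)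
    (hy : ActsDiagonally b ψ (fun j ↦ chainWeight c 0 1 0 j) p y) :
    ∃ r, (r = 0 ∨ c = 0 ∧ r = -1) ∧ p = Pi.single 1 r := by
  refine ⟨p 1, ?_, by simpa [chainWeight] using hy.left_eq hψ⟩
  rcases hψ.eq_zero_or_eq_one with rfl | rfl
  · simpa [chainWeight, eq_neg_iff_add_eq_zero, add_comm] using hy.left_apply_one_mul hψ
  · exact Or.inl (hy.left_apply_one_eq_zero hψ)

theorem exists_equiv_filiformExtension (hψ : IsFiliformNilradical b c ψ)
    (hsolv : IsSolvableBracket b) (hdim : Module.finrank ℂ L = m + 5) :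
    ∃ r, (r = 0 ∨ c = 0 ∧ r = -1) ∧ ∃ φ : L ≃ₗ[ℂ] (Fin (m + 3 + 2) → ℂ),
      ∀ u v, φ (b u v) = filiformExtension c r (φ u) (φ v) := by
  obtain ⟨ψ', h, hψ', hh⟩ :=
    hψ.exists_bracket_eq_regularWeight_mul (hψ.generatorWeights_surjective hsolv hdim)
  have hw (j : Fin (m + 3)) : (regularWeight c j : ℂ) ≠ 0 :=
    Nat.cast_ne_zero.2 (regularWeight_ne_zero c j)
  have hw_inj : Function.Injective fun j : Fin (m + 3) ↦ (regularWeight c j : ℂ) := by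
    refine Nat.cast_injective.comp fun i j hij ↦ ?_
    by_contra hne
    exact regularWeight_ne i.isLt j.isLt (Fin.val_ne_of_ne hne) hij
  have hlift (g : ℂ × ℂ) : ∃ a, generatorWeights b ψ' a = g ∧ b a h = 0 := by
    obtain ⟨a, rfl⟩ := hψ'.generatorWeights_surjective hsolv hdim g
    exact hψ'.exists_generatorWeights_eq_and_bracket_eq_zero hsolv hh hw a
  obtain ⟨x, hxg, hxh⟩ := hlift (1, if c = 0 then 0 else 1)
  obtain ⟨y, hyg, hyh⟩ := hlift (0, 1)
  obtain ⟨lx, hx⟩ := hψ'.exists_actsDiagonally hh hw_inj hxg hxh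
  obtain ⟨ly, hy⟩ := hψ'.exists_actsDiagonally hh hw_inj hyg hyh
  obtain rfl := hψ'.left_eq_single_zero hx
  obtain ⟨r, hr, rfl⟩ := hψ'.exists_left_eq_single_one hy
  have hbracket {a a' : L} (ha : b a h = 0) (ha' : b a' h = 0) : b a a' = 0 :=
    hψ'.bracket_eq_zero hsolv hh hw ha ha'
  exact ⟨r, hr, exists_equiv_diagonalExtension hψ'.map_smul_chainShift hx hy (hbracket hxh hxh)
    (hbracket hxh hyh) (hbracket hyh hxh) (hbracket hyh hyh)
    (hψ'.exists_sub_mem_range hsolv hxg hyg) hdim⟩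

end IsFiliformNilradical

end Classification

theorem solvable_leibniz_with_filiform_nilradical_general
    (n : ℕ) (hn : 3 ≤ n)
    (L : Type*) [AddCommGroup L] [Module ℂ L]
    (b : L →ₗ[ℂ] L →ₗ[ℂ] L) (hLeib : IsLeibnizBracket b)
    (hsolv : IsSolvableBracket b)
    (hdim : Module.finrank ℂ L = n + 2)
    (N : Submodule ℂ L) (hNrad : IsNilradical b N)
    (hNiso :
      (∃ ψ : (Fin n → ℂ) →ₗ[ℂ] L, Function.Injective ψ ∧ LinearMap.range ψ = N ∧
        ∀ u v, ψ (bracketF1 n u v) = b (ψ u) (ψ v)) ∨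
      (∃ ψ : (Fin n → ℂ) →ₗ[ℂ] L, Function.Injective ψ ∧ LinearMap.range ψ = N ∧
        ∀ u v, ψ (bracketF2 n u v) = b (ψ u) (ψ v))) :
    (∃ φ : L ≃ₗ[ℂ] (Fin (n + 2) → ℂ),
        ∀ u v : L, φ (b u v) = bracketR1 n (φ u) (φ v)) ∨
    (∃ φ : L ≃ₗ[ℂ] (Fin (n + 2) → ℂ),
        ∀ u v : L, φ (b u v) = bracketR2 n (φ u) (φ v)) ∨
    (∃ φ : L ≃ₗ[ℂ] (Fin (n + 2) → ℂ),
        ∀ u v : L, φ (b u v) = bracketR3 n (φ u) (φ v)) := by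
  obtain ⟨m, rfl⟩ := Nat.exists_eq_add_of_le' hn
  simp only [bracketR1_eq_filiformExtension, bracketR2_eq_filiformExtension,
    bracketR3_eq_filiformExtension]
  rcases hNiso with ⟨ψ, hinj, rfl, hbracket⟩ | ⟨ψ, hinj, rfl, hbracket⟩
  · simp only [bracketF1_eq_smul_chainShift] at hbracket
    have hψ : IsFiliformNilradical b 1 ψ := ⟨hLeib, Or.inr rfl, hinj, hbracket, hNrad⟩
    obtain ⟨r, rfl | ⟨h10, -⟩, hφ⟩ := hψ.exists_equiv_filiformExtension hsolv hdim
    · exact Or.inl hφ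
    · exact absurd h10 one_ne_zero
  · simp only [bracketF2_eq_smul_chainShift] at hbracket
    have hψ : IsFiliformNilradical b 0 ψ := ⟨hLeib, Or.inl rfl, hinj, hbracket, hNrad⟩
    obtain ⟨r, rfl | ⟨-, rfl⟩, hφ⟩ := hψ.exists_equiv_filiformExtension hsolv hdim
    · exact Or.inr (Or.inr hφ)
    · exact Or.inr (Or.inl hφ)

/-- Any `(n+2)`-dimensional complex solvable Leibniz algebra (`n ≥ 5`) whose nilradical is
isomorphic to the naturally graded non-Lie filiform Leibniz algebra `F_n^1` or `F_n^2`
is isomorphic to one of `R₁`, `R₂`, `R₃`. -/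
theorem solvable_leibniz_with_filiform_nilradical
    (n : ℕ) (hn : 5 ≤ n)
    (L : Type) [AddCommGroup L] [Module ℂ L] [FiniteDimensional ℂ L]
    (b : L →ₗ[ℂ] L →ₗ[ℂ] L) (hLeib : IsLeibnizBracket b)
    (hsolv : IsSolvableBracket b)
    (hdim : Module.finrank ℂ L = n + 2)
    (N : Submodule ℂ L) (hNrad : IsNilradical b N)
    (hNiso :
      (∃ ψ : (Fin n → ℂ) →ₗ[ℂ] L, Function.Injective ψ ∧ LinearMap.range ψ = N ∧
        ∀ u v, ψ (bracketF1 n u v) = b (ψ u) (ψ v)) ∨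
      (∃ ψ : (Fin n → ℂ) →ₗ[ℂ] L, Function.Injective ψ ∧ LinearMap.range ψ = N ∧
        ∀ u v, ψ (bracketF2 n u v) = b (ψ u) (ψ v))) :
    (∃ φ : L ≃ₗ[ℂ] (Fin (n + 2) → ℂ),
        ∀ u v : L, φ (b u v) = bracketR1 n (φ u) (φ v)) ∨
    (∃ φ : L ≃ₗ[ℂ] (Fin (n + 2) → ℂ),
        ∀ u v : L, φ (b u v) = bracketR2 n (φ u) (φ v)) ∨
    (∃ φ : L ≃ₗ[ℂ] (Fin (n + 2) → ℂ),
        ∀ u v : L, φ (b u v) = bracketR3 n (φ u) (φ v)) :=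
  solvable_leibniz_with_filiform_nilradical_general n (by omega) L b hLeib hsolv hdim N
    hNrad hNiso
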